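/- arXiv:2407.01845 — 3 statements merged into one kernel-verified Lean document; each statement's English description precedes it below -/
import Mathlib

section
/- Let k be a field, let H and T be finite-dimensional k-vector spaces, let n ≥ 1 be an integer, and let u_1, …, u_n ∈ H, w_1, …, w_n ∈ T be vectors and c_1, …, c_n ∈ k scalars, not all zero, such that ∑_{i=1}^n c_i (u_i ⊗ w_i) = 0 in H ⊗_k T. Then the set D = {i : c_i ≠ 0} is nonempty and satisfies dim_k span{u_i : i ∈ D} + dim_k span{w_i : i ∈ D} ≤ |D|. -/
/-- If `H`, `T` are finite-dimensional vector spaces over a field `k`, `n ≥ 1`,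
`u₁, …, uₙ ∈ H`, `w₁, …, wₙ ∈ T` and scalars `c₁, …, cₙ ∈ k`, not all zero, satisfy
`∑ cᵢ (uᵢ ⊗ wᵢ) = 0` in `H ⊗[k] T`, then `D = {i : cᵢ ≠ 0}` is nonempty and
`dim span{uᵢ : i ∈ D} + dim span{wᵢ : i ∈ D} ≤ |D|`. -/
theorem finrank_span_add_finrank_span_le_card_of_sum_smul_tmul_eq_zero
    (k : Type*) [Field k]
    (H T : Type*) [AddCommGroup H] [Module k H] [AddCommGroup T] [Module k T]
    [FiniteDimensional k H] [FiniteDimensional k T]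
    (n : ℕ) (hn : 1 ≤ n)
    (u : Fin n → H) (w : Fin n → T) (c : Fin n → k)
    (hc : ∃ i, c i ≠ 0)
    (hsum : (∑ i : Fin n, c i • (u i ⊗ₜ[k] w i)) = (0 : TensorProduct k H T))
    (D : Finset (Fin n)) (hD : ∀ i, i ∈ D ↔ c i ≠ 0) :
    D.Nonempty ∧
      Module.finrank k (Submodule.span k (u '' (D : Set (Fin n)))) +
        Module.finrank k (Submodule.span k (w '' (D : Set (Fin n)))) ≤ D.card := by
  classical
  refine ⟨hc.imp fun i hi => (hD i).2 hi, ?_⟩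
  set A : (D → k) →ₗ[k] H := Fintype.linearCombination k (fun i : D => u i) with hA
  set B : (D → k) →ₗ[k] T := Fintype.linearCombination k (fun i : D => c i • w i) with hB
  have hAr : LinearMap.range A = Submodule.span k (u '' (D : Set (Fin n))) := by
    rw [hA, Fintype.range_linearCombination]
    congr 1
    ext x
    simp
  have hBr : LinearMap.range B = Submodule.span k (w '' (D : Set (Fin n))) := by
    rw [hB, Fintype.range_linearCombination]
    apply le_antisymm
    · rw [Submodule.span_le]
      rintro _ ⟨i, rfl⟩
      exact Submodule.smul_mem _ _ (Submodule.subset_span ⟨i, i.2, rfl⟩)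
    · rw [Submodule.span_le]
      rintro _ ⟨i, hi, rfl⟩
      have hi' : i ∈ D := hi
      have h := Submodule.smul_mem (Submodule.span k (Set.range fun i : D => c i • w i))
        (c i)⁻¹ (Submodule.subset_span ⟨⟨i, hi'⟩, rfl⟩)
      simpa [smul_smul, inv_mul_cancel₀ ((hD i).1 hi')] using h
  let e := ((Pi.basisFun k D).constr k (M' := k)).symm
  let G : Module.Dual k T →ₗ[k] (D → k) := e.toLinearMap ∘ₗ B.dualMap
  have hG : ∀ φ i, G φ i = c i * φ (w i) := by
    intro φ i
    have : G φ i = φ (B (Pi.single i 1)) := by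
      simp [G, e, Module.Basis.constr]
    rw [this, hB, Fintype.linearCombination_apply_single]
    simp
  have hGr : Module.finrank k (LinearMap.range G) = Module.finrank k (LinearMap.range B) := by
    rw [← LinearMap.finrank_range_dualMap_eq_finrank_range B, LinearMap.range_comp]
    exact LinearEquiv.finrank_map_eq e _
  have hle : LinearMap.range G ≤ LinearMap.ker A := by
    rintro _ ⟨φ, rfl⟩
    rw [LinearMap.mem_ker, hA, Fintype.linearCombination_apply]
    simp only [hG]
    have h := congrArg (fun x => TensorProduct.rid k H (LinearMap.lTensor H φ x)) hsum
    simp only [map_sum, map_smul, LinearMap.lTensor_tmul, TensorProduct.rid_tmul, map_zero,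
      smul_smul] at h
    rw [Finset.sum_coe_sort D (fun i => (c i * φ (w i)) • u i), ← h]
    apply Finset.sum_subset (Finset.subset_univ _)
    intro i _ hi
    have : c i = 0 := by
      by_contra h'
      exact hi ((hD i).2 h')
    simp [this]
  have h1 := LinearMap.finrank_range_add_finrank_ker A
  have h2 := Submodule.finrank_mono hle
  rw [Module.finrank_fintype_fun_eq_card, Fintype.card_coe] at h1
  rw [← hAr, ← hBr]
  omega
end

section
/- Let k be a field and let l ≥ 1 be an integer. Let R be the quotient of the polynomial ring k[x, y, t] in three variables by the principal ideal generated by x·y − t^{l+1}, let m₀ be the maximal ideal of R generated by the images of x, y, and t, and let R_{m₀} be the localization of R at m₀, with maximal ideal 𝔪. Then the cotangent space 𝔪/𝔪², as a vector space over the residue field k, has dimension exactly 3. -/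
open MvPolynomial IsLocalRing in
/-- A local ring whose maximal ideal is generated by `a 0, a 1, a 2`, and having for each `i` a
ring homomorphism to the dual numbers with `a j ↦ δ i j • ε`, has embedding dimension `3`. -/
lemma finrank_cotangent_aux {k S : Type*} [Field k] [CommRing S] [IsLocalRing S]
    [IsNoetherianRing S] (a : Fin 3 → maximalIdeal S)
    (ha : Ideal.span (Set.range fun i => (a i : S)) = maximalIdeal S)
    (φ : Fin 3 → S →+* DualNumber k)
    (hφ : ∀ i j, φ i (a j) = if j = i then DualNumber.eps else 0) :
    Module.finrank (ResidueField S) (CotangentSpace S) = 3 := by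
  have hfst : ∀ i (s : S), (φ i s).fst = 0 ↔ s ∈ maximalIdeal S := by
    intro i
    have hle : maximalIdeal S ≤
        RingHom.ker ((TrivSqZeroExt.fstHom k k k).toRingHom.comp (φ i)) := by
      rw [← ha, Ideal.span_le]
      rintro _ ⟨j, rfl⟩
      have := hφ i j
      simp only [SetLike.mem_coe, RingHom.mem_ker, RingHom.comp_apply, this]
      split_ifs <;> simp
    intro s
    constructor
    · intro h
      rw [mem_maximalIdeal, mem_nonunits_iff]
      intro hu
      have := (hu.map (φ i)).map (TrivSqZeroExt.fstHom k k k)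
      simp [h] at this
    · intro h
      simpa using hle h
  have hsq : ∀ i (s : S), s ∈ maximalIdeal S ^ 2 → φ i s = 0 := by
    intro i s hs
    have : maximalIdeal S ^ 2 ≤ RingHom.ker (φ i) := by
      rw [pow_two, Ideal.mul_le]
      intro r hr s hs
      have h1 := (hfst i r).2 hr
      have h2 := (hfst i s).2 hs
      rw [RingHom.mem_ker, map_mul]
      ext <;> simp [h1, h2]
    exact this hs
  have hli : LinearIndependent (ResidueField S)
      (fun i => ((maximalIdeal S).toCotangent (a i) : CotangentSpace S)) := by
    rw [Fintype.linearIndependent_iff]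
    intro g hg i
    choose s hs using fun j => residue_surjective (g j)
    have h0 : (maximalIdeal S).toCotangent (∑ j, s j • a j) = 0 := by
      rw [map_sum, ← hg]
      refine Finset.sum_congr rfl fun j _ => ?_
      rw [map_smul, ← hs j]
      rfl
    rw [Ideal.toCotangent_eq_zero] at h0
    have h1 := hsq i _ h0
    have h2 : φ i (s i) * DualNumber.eps = 0 := by
      simpa [hφ] using h1
    have h3 : (φ i (s i)).fst = 0 := by
      have := congrArg TrivSqZeroExt.snd h2
      simpa using this
    rw [← hs i, residue_eq_zero_iff]
    exact (hfst i _).1 h3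
  have hsp : Submodule.span (ResidueField S)
      (Set.range fun i => ((maximalIdeal S).toCotangent (a i) : CotangentSpace S)) = ⊤ := by
    have := (CotangentSpace.span_image_eq_top_iff (s := Set.range a)).2 (by
      apply Submodule.map_injective_of_injective (maximalIdeal S).subtype_injective
      rw [Submodule.map_span, Submodule.map_top, Submodule.range_subtype, ← Set.range_comp]
      exact ha)
    rw [← Set.range_comp] at this
    exact this
  rw [Module.finrank_eq_card_basis (Module.Basis.mk hli hsp.ge)]
  simp

open MvPolynomial in
/-- At the origin of the `A_l` surface singularity `xy = t^{l+1}` (with `l ≥ 1`), the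
cotangent space `𝔪/𝔪²` of the local ring is `3`-dimensional over the residue field. -/
theorem cotangentSpace_Al_singularity_finrank_eq_three
    (k : Type*) [Field k] (l : ℕ) (hl : 1 ≤ l)
    (I : Ideal (MvPolynomial (Fin 3) k))
    (hI : I = Ideal.span {(X 0 : MvPolynomial (Fin 3) k) * X 1 - X 2 ^ (l + 1)})
    (m₀ : Ideal (MvPolynomial (Fin 3) k ⧸ I))
    (hm₀ : m₀ = Ideal.span
      {Ideal.Quotient.mk I (X 0), Ideal.Quotient.mk I (X 1), Ideal.Quotient.mk I (X 2)})
    [m₀.IsMaximal] :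
    Module.finrank (IsLocalRing.ResidueField (Localization.AtPrime m₀))
      (IsLocalRing.CotangentSpace (Localization.AtPrime m₀)) = 3 := by
  have hrange : m₀ = Ideal.span (Set.range fun i : Fin 3 => Ideal.Quotient.mk I (X i)) := by
    rw [hm₀]
    congr 1
    ext z
    simp [Fin.exists_fin_succ, eq_comm]
  have hmem : ∀ i, Ideal.Quotient.mk I (X i) ∈ m₀ := fun i => by
    rw [hrange]; exact Ideal.subset_span ⟨i, rfl⟩
  let v : Fin 3 → Fin 3 → DualNumber k := fun i j => if j = i then DualNumber.eps else 0
  have hv : ∀ i j j', v i j * v i j' = 0 := by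
    intro i j j'
    simp only [v]
    split_ifs <;> simp
  let f : Fin 3 → (MvPolynomial (Fin 3) k →+* DualNumber k) :=
    fun i => (aeval (v i)).toRingHom
  have hfX : ∀ i j, f i (X j) = v i j := fun i j => by simp [f]
  have hfI : ∀ i, ∀ p ∈ I, f i p = 0 := by
    intro i p hp
    have : I ≤ RingHom.ker (f i) := by
      rw [hI, Ideal.span_le, Set.singleton_subset_iff, SetLike.mem_coe, RingHom.mem_ker]
      obtain ⟨n, rfl⟩ := Nat.exists_eq_add_of_le hl
      rw [map_sub, map_mul, map_pow, hfX, hfX, hfX, hv,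
        show 1 + n + 1 = 2 + n by ring, pow_add, pow_two, hv]
      simp
    exact this hp
  let g : Fin 3 → (MvPolynomial (Fin 3) k ⧸ I →+* DualNumber k) :=
    fun i => Ideal.Quotient.lift I (f i) (hfI i)
  have hgX : ∀ i j, g i (Ideal.Quotient.mk I (X j)) = v i j := fun i j => by
    simp only [g, Ideal.Quotient.lift_mk, hfX]
  have hgu : ∀ i (y : m₀.primeCompl), IsUnit (g i y) := by
    rintro i ⟨y, hy⟩
    have hle : m₀ ≤ RingHom.ker ((TrivSqZeroExt.fstHom k k k).toRingHom.comp (g i)) := by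
      rw [hrange, Ideal.span_le]
      rintro _ ⟨j, rfl⟩
      simp only [SetLike.mem_coe, RingHom.mem_ker, RingHom.comp_apply, hgX, v]
      split_ifs <;> simp
    have heq := Ideal.IsMaximal.eq_of_le ‹m₀.IsMaximal› (RingHom.ker_ne_top _) hle
    rw [TrivSqZeroExt.isUnit_iff_isUnit_fst, isUnit_iff_ne_zero]
    intro h
    apply hy
    rw [heq, SetLike.mem_coe, RingHom.mem_ker]
    simpa using h
  refine finrank_cotangent_aux (k := k)
    (fun i => ⟨algebraMap _ (Localization.AtPrime m₀) (Ideal.Quotient.mk I (X i)), ?_⟩) ?_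
    (fun i => IsLocalization.lift (M := m₀.primeCompl) (hgu i)) ?_
  · rw [← Localization.AtPrime.map_eq_maximalIdeal]
    exact Ideal.mem_map_of_mem _ (hmem i)
  · refine Eq.trans ?_ (Localization.AtPrime.map_eq_maximalIdeal (I := m₀))
    refine Eq.trans ?_
      (congrArg (Ideal.map (algebraMap _ (Localization.AtPrime m₀))) hrange).symm
    rw [Ideal.map_span, ← Set.range_comp]
    rfl
  · intro i j
    simp only [IsLocalization.lift_eq, hgX, v]
end

section
/- Let k be a field and let l ≥ 1 be an integer. There is a well-defined k-algebra homomorphism φ from R = k[x, y, t]/(x·y − t^{l+1}) to R' = k[x'', y'', t]/(x''·y'' − t^{l−1}) determined by x ↦ t·x'', y ↦ t·y'', and t ↦ t (well defined because (t x'')(t y'') − t^{l+1} = t²(x'' y'' − t^{l−1})). Moreover, the induced map between the localizations of R and R' away from the image of t (that is, after inverting t on both sides) is an isomorphism of k-algebras. -/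
theorem away_equiv_gen {k A B S T : Type*} [CommRing k] [CommRing A] [CommRing B]
    [CommRing S] [CommRing T] [Algebra k A] [Algebra k B] [Algebra k S] [Algebra k T]
    [Algebra A S] [Algebra B T] [IsScalarTower k A S] [IsScalarTower k B T]
    (a : A) (b : B) [IsLocalization.Away a S] [IsLocalization.Away b T] (φ : A →ₐ[k] B)
    (ψ : B →ₐ[k] S) (hφ : φ a = b)
    (hψ : ψ b = algebraMap A S a) (h1 : ∀ r, ψ (φ r) = algebraMap A S r)
    (h2 : ∀ F : S →ₐ[k] T,
      (∀ r, F (algebraMap A S r) = algebraMap B T (φ r)) → ∀ s, F (ψ s) = algebraMap B T s) :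
    ∃ e : S ≃ₐ[k] T, ∀ r, e (algebraMap A S r) = algebraMap B T (φ r) := by
  obtain ⟨F, hF⟩ : ∃ F : S →ₐ[k] T, ∀ r, F (algebraMap A S r) = algebraMap B T (φ r) := by
    have hf : ∀ y : Submonoid.powers a, IsUnit (((IsScalarTower.toAlgHom k B T).comp φ) y) := by
      rintro ⟨_, n, rfl⟩
      simp only [map_pow, AlgHom.comp_apply, hφ]
      exact (IsLocalization.Away.algebraMap_isUnit b).pow n
    exact ⟨IsLocalization.liftAlgHom hf, fun r => IsLocalization.lift_eq _ r⟩
  obtain ⟨G, hG⟩ : ∃ G : T →ₐ[k] S, ∀ s, G (algebraMap B T s) = ψ s := by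
    have hg : ∀ y : Submonoid.powers b, IsUnit (ψ y) := by
      rintro ⟨_, n, rfl⟩
      simp only [map_pow, hψ]
      exact (IsLocalization.Away.algebraMap_isUnit a).pow n
    exact ⟨IsLocalization.liftAlgHom hg, fun r => IsLocalization.lift_eq _ r⟩
  have hFG : F.comp G = AlgHom.id k T := by
    apply AlgHom.coe_ringHom_injective
    apply IsLocalization.ringHom_ext (Submonoid.powers b)
    ext s
    simp [hG, h2 F hF]
  have hGF : G.comp F = AlgHom.id k S := by
    apply AlgHom.coe_ringHom_injective
    apply IsLocalization.ringHom_ext (Submonoid.powers a)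
    ext s
    simp [hF, hG, h1]
  exact ⟨AlgEquiv.ofAlgHom F G hFG hGF, hF⟩

set_option maxHeartbeats 4000000 in
open MvPolynomial in
/-- There is a `k`-algebra homomorphism `φ : k[x,y,t]/(xy − t^{l+1}) →
k[x'',y'',t]/(x''y'' − t^{l−1})` with `x ↦ t·x''`, `y ↦ t·y''`, `t ↦ t`, and the induced
map between the localizations away from `t` is an isomorphism of `k`-algebras. -/
theorem blowup_middle_chart_iso_away_t
    (k : Type*) [Field k] (l : ℕ) (hl : 1 ≤ l)
    (I : Ideal (MvPolynomial (Fin 3) k))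
    (hI : I = Ideal.span {(X 0 : MvPolynomial (Fin 3) k) * X 1 - X 2 ^ (l + 1)})
    (I' : Ideal (MvPolynomial (Fin 3) k))
    (hI' : I' = Ideal.span {(X 0 : MvPolynomial (Fin 3) k) * X 1 - X 2 ^ (l - 1)}) :
    ∃ φ : (MvPolynomial (Fin 3) k ⧸ I) →ₐ[k] (MvPolynomial (Fin 3) k ⧸ I'),
      φ (Ideal.Quotient.mk I (X 0)) = Ideal.Quotient.mk I' (X 2) * Ideal.Quotient.mk I' (X 0) ∧
      φ (Ideal.Quotient.mk I (X 1)) = Ideal.Quotient.mk I' (X 2) * Ideal.Quotient.mk I' (X 1) ∧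
      φ (Ideal.Quotient.mk I (X 2)) = Ideal.Quotient.mk I' (X 2) ∧
      ∃ e : Localization.Away (Ideal.Quotient.mk I (X 2)) ≃ₐ[k]
            Localization.Away (Ideal.Quotient.mk I' (X 2)),
        ∀ r : MvPolynomial (Fin 3) k ⧸ I,
          e (algebraMap _ _ r) = algebraMap _ _ (φ r) := by
  obtain ⟨m, rfl⟩ : ∃ m, l = m + 1 := ⟨l - 1, by omega⟩
  rw [Nat.add_sub_cancel] at hI'
  have rel : Ideal.Quotient.mk I (X 0) * Ideal.Quotient.mk I (X 1)
      = Ideal.Quotient.mk I (X 2) ^ (m + 2) := by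
    rw [← map_mul, ← map_pow, Ideal.Quotient.eq, hI]
    exact Ideal.subset_span rfl
  have rel' : Ideal.Quotient.mk I' (X 0) * Ideal.Quotient.mk I' (X 1)
      = Ideal.Quotient.mk I' (X 2) ^ m := by
    rw [← map_mul, ← map_pow, Ideal.Quotient.eq, hI']
    exact Ideal.subset_span rfl
  set x := Ideal.Quotient.mk I (X 0) with hx
  set y := Ideal.Quotient.mk I (X 1) with hy
  set t := Ideal.Quotient.mk I (X 2) with ht
  set x' := Ideal.Quotient.mk I' (X 0) with hx'
  set y' := Ideal.Quotient.mk I' (X 1) with hy'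
  set t' := Ideal.Quotient.mk I' (X 2) with ht'
  let φ₀ : MvPolynomial (Fin 3) k →ₐ[k] (MvPolynomial (Fin 3) k ⧸ I') :=
    aeval ![t' * x', t' * y', t']
  have hφ₀ : ∀ p ∈ I, φ₀ p = 0 := by
    intro p hp
    have : I ≤ RingHom.ker φ₀ := by
      rw [hI, Ideal.span_singleton_le_iff_mem, RingHom.mem_ker]
      simp only [φ₀, map_sub, map_mul, map_pow, aeval_X]
      simp
      linear_combination t' ^ 2 * rel'
    exact this hp
  let φ := Ideal.Quotient.liftₐ I φ₀ hφ₀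
  have hφ : ∀ p, φ (Ideal.Quotient.mk I p) = φ₀ p := fun p => rfl
  have φx : φ x = t' * x' := by rw [hx, hφ]; simp [φ₀]
  have φy : φ y = t' * y' := by rw [hy, hφ]; simp [φ₀]
  have φt : φ t = t' := by rw [ht, hφ]; simp [φ₀]
  let L := Localization.Away t
  let c : (MvPolynomial (Fin 3) k ⧸ I) →ₐ[k] L := IsScalarTower.toAlgHom k _ L
  obtain ⟨u, hu⟩ : ∃ u : L, c t * u = 1 :=
    (IsLocalization.Away.algebraMap_isUnit (S := L) t).exists_right_inv
  have relL : c x * c y = c t ^ (m + 2) := by rw [← map_mul, rel, map_pow]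
  let ψ₀ : MvPolynomial (Fin 3) k →ₐ[k] L := aeval ![u * c x, u * c y, c t]
  have hψ₀ : ∀ p ∈ I', ψ₀ p = 0 := by
    intro p hp
    have : I' ≤ RingHom.ker ψ₀ := by
      rw [hI', Ideal.span_singleton_le_iff_mem, RingHom.mem_ker]
      simp only [ψ₀, map_sub, map_mul, map_pow, aeval_X]
      simp
      linear_combination u ^ 2 * relL + (c t ^ m) * (c t * u + 1) * hu
    exact this hp
  let ψ := Ideal.Quotient.liftₐ I' ψ₀ hψ₀
  have hψ : ∀ p, ψ (Ideal.Quotient.mk I' p) = ψ₀ p := fun p => rfl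
  have ψx : ψ x' = u * c x := by rw [hx', hψ]; simp [ψ₀]
  have ψy : ψ y' = u * c y := by rw [hy', hψ]; simp [ψ₀]
  have ψt : ψ t' = c t := by rw [ht', hψ]; simp [ψ₀]
  refine ⟨φ, φx, φy, φt, away_equiv_gen t t' φ ψ φt ψt ?_ ?_⟩
  · have : ψ.comp φ = c := by
      apply Ideal.Quotient.algHom_ext
      apply MvPolynomial.algHom_ext
      intro i
      fin_cases i
      · change ψ (φ x) = c x
        rw [φx, map_mul, ψt, ψx]
        linear_combination c x * hu
      · change ψ (φ y) = c y
        rw [φy, map_mul, ψt, ψy]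
        linear_combination c y * hu
      · change ψ (φ t) = c t
        rw [φt, ψt]
    exact fun r => DFunLike.congr_fun this r
  · intro F hF
    let c' : (MvPolynomial (Fin 3) k ⧸ I') →ₐ[k] Localization.Away t' :=
      IsScalarTower.toAlgHom k _ _
    have hF' : ∀ r, F (c r) = c' (φ r) := hF
    have hFu : c' t' * F u = 1 := by
      have h := hF' t
      rw [φt] at h
      rw [← h, ← map_mul, hu, map_one]
    have : F.comp ψ = c' := by
      apply Ideal.Quotient.algHom_ext
      apply MvPolynomial.algHom_ext
      intro i
      fin_cases i
      · change F (ψ x') = c' x'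
        rw [ψx, map_mul, hF', φx, map_mul]
        linear_combination c' x' * hFu
      · change F (ψ y') = c' y'
        rw [ψy, map_mul, hF', φy, map_mul]
        linear_combination c' y' * hFu
      · change F (ψ t') = c' t'
        rw [ψt, hF', φt]
    exact fun r => DFunLike.congr_fun this r
end
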